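/- For d ≥ 2 and p > p_c(d), the entropy functional I is not lower semicontinuous on M_1(Ω_0 × U_d) with respect to the weak topology; consequently I ≠ I**. -/

import Mathlib

open MeasureTheory ProbabilityTheory Filter Topology
open scoped ENNReal NNReal BigOperators

noncomputable section

namespace SRWPC

/-- Vertices of the lattice `ℤ^d`. -/
abbrev V (d : ℕ) := Fin d → ℤ

/-- Index of a nearest-neighbour bond: the bond from `x` to `x + eᵢ`. -/
abbrev EdgeIx (d : ℕ) := V d × Fin d

/-- Percolation configurations `Ω = {0,1}^{𝔹_d}`. -/
abbrev Config (d : ℕ) := EdgeIx d → Bool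

/-- The `i`-th coordinate unit vector. -/
def unitVec (d : ℕ) (i : Fin d) : V d := fun j => if j = i then 1 else 0

/-- The set `𝕌_d` of the `2d` unit vectors. -/
def Ud (d : ℕ) : Finset (V d) :=
  (Finset.univ.image (unitVec d)) ∪ (Finset.univ.image (fun i => -unitVec d i))

/-- The type of nearest-neighbour steps (elements of `𝕌_d`). -/
abbrev Step (d : ℕ) := {e : V d // e ∈ Ud d}

/-- The shift `(τ_x ω)_b = ω_{x+b}`. -/
def shift {d : ℕ} (x : V d) (ω : Config d) : Config d := fun b => ω (b.1 + x, b.2)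

/-- The bond from `x` to `x + e` is open in `ω`. -/
def edgeOpen {d : ℕ} (ω : Config d) (x e : V d) : Prop :=
  ∃ i : Fin d, (e = unitVec d i ∧ ω (x, i) = true) ∨
    (e = -unitVec d i ∧ ω (x - unitVec d i, i) = true)

open Classical in
/-- The number of open bonds incident to `x`. -/
def openDeg {d : ℕ} (ω : Config d) (x : V d) : ℕ :=
  ((Ud d).filter (fun e => edgeOpen ω x e)).card

open Classical in
/-- The transition probability `π_ω(x,e)` of the simple random walk on the cluster. -/
def trans {d : ℕ} (ω : Config d) (x e : V d) : ℝ :=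
  if edgeOpen ω x e then 1 / openDeg ω x else 0

/-- `γ` restricted to `{0,…,n}` is a nearest-neighbour open path in `ω`. -/
def IsOpenPath {d : ℕ} (ω : Config d) (γ : ℕ → V d) (n : ℕ) : Prop :=
  ∀ k < n, (γ (k + 1) - γ k) ∈ Ud d ∧ edgeOpen ω (γ k) (γ (k + 1) - γ k)

/-- `x` lies in the box `[-r,r]^d`. -/
def inBox {d : ℕ} (x : V d) (r : ℝ) : Prop := ∀ i, |(x i : ℝ)| ≤ r

/-- `x` is joined to infinity by a nearest-neighbour open path, i.e. `x ∈ 𝒞_∞(ω)`. -/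
def memCluster {d : ℕ} (ω : Config d) (x : V d) : Prop :=
  ∀ R : ℕ, ∃ (γ : ℕ → V d) (n : ℕ), γ 0 = x ∧ IsOpenPath ω γ n ∧ ¬ inBox (γ n) R

/-- The event `Ω_0 = {0 ∈ 𝒞_∞}`. -/
def cluZero (d : ℕ) : Set (Config d) := {ω | memCluster ω 0}

/-- `P` is the Bernoulli bond percolation product measure with parameter `q`. -/
def IsBernoulli (d : ℕ) (q : ℝ) (P : Measure (Config d)) : Prop :=
  IsProbabilityMeasure P ∧
    ∀ (F : Finset (EdgeIx d)) (a : EdgeIx d → Bool),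
      P {ω | ∀ b ∈ F, ω b = a b} = ∏ b ∈ F, ENNReal.ofReal (if a b then q else 1 - q)

/-- The critical probability `p_c(d)` of bond percolation on `ℤ^d`. -/
def pc (d : ℕ) : ℝ :=
  sInf {q : ℝ | q ∈ Set.Icc (0 : ℝ) 1 ∧
    ∀ P : Measure (Config d), IsBernoulli d q P → 0 < P (cluZero d)}

variable {d : ℕ}

/-- Position of the walk after `k` steps, given the sequence of steps `s`. -/
def pos {n : ℕ} (s : Fin n → Step d) (k : ℕ) : V d :=
  ∑ j ∈ Finset.univ.filter (fun j : Fin n => (j : ℕ) < k), (s j).1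

/-- The environment/step pair `(τ_{X_k} ω, X_{k+1} - X_k)` seen at time `k`. -/
def envPair (ω : Config d) {n : ℕ} (s : Fin n → Step d) (k : Fin n) : Config d × Step d :=
  (shift (pos s k) ω, s k)

/-- Quenched probability of a given sequence of `n` steps under the Markov kernel `κ`. -/
def pathProb (κ : Config d → Step d → ℝ) (ω : Config d) {n : ℕ} (s : Fin n → Step d) : ℝ :=
  ∏ k : Fin n, κ (shift (pos s k) ω) (s k)

/-- The SRWPC transition kernel `π`. -/
def srw (d : ℕ) : Config d → Step d → ℝ := fun ω e => trans ω 0 e.1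

/-- Quenched expectation (under `P_0^{κ,ω}`) of a functional of the first `n` steps. -/
def qE (κ : Config d → Step d → ℝ) (ω : Config d) {n : ℕ} (F : (Fin n → Step d) → ℝ) : ℝ :=
  ∑ s : Fin n → Step d, pathProb κ ω s * F s

/-- Quenched probability (under `P_0^{κ,ω}`) of a set of `n`-step trajectories. -/
def qP (κ : Config d → Step d → ℝ) (ω : Config d) {n : ℕ} (A : Set (Fin n → Step d)) : ℝ :=
  ∑ s : Fin n → Step d, A.indicator (fun s' => pathProb κ ω s') s

/-- Quenched probability, `ℝ≥0∞`-valued. -/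
def qPE (κ : Config d → Step d → ℝ) (ω : Config d) {n : ℕ} (A : Set (Fin n → Step d)) : ℝ≥0∞ :=
  ENNReal.ofReal (qP κ ω A)

/-- The environment-step space `Ω_0 × 𝕌_d`. -/
abbrev EnvSp (d : ℕ) := Config d × Step d

/-- The pair empirical measure `ℒ_n` as a measure. -/
def empMeas (ω : Config d) {n : ℕ} (s : Fin n → Step d) : Measure (EnvSp d) :=
  (n : ℝ≥0∞)⁻¹ • ∑ k : Fin n, Measure.dirac (envPair ω s k)

lemma empMeas_isProb (ω : Config d) {n : ℕ} (hn : n ≠ 0) (s : Fin n → Step d) :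
    IsProbabilityMeasure (empMeas ω s) := by
  constructor
  simp only [empMeas, Measure.smul_apply, Measure.coe_finset_sum, Finset.sum_apply,
    Measure.dirac_apply_of_mem (Set.mem_univ _), smul_eq_mul]
  rw [Finset.sum_const, Finset.card_univ, Fintype.card_fin, nsmul_eq_mul, mul_one,
    ENNReal.inv_mul_cancel]
  · exact_mod_cast hn
  · exact ENNReal.natCast_ne_top n

/-- The pair empirical measure `ℒ_{n+1}` as a probability measure. -/
def empPM (ω : Config d) {n : ℕ} (s : Fin (n + 1) → Step d) : ProbabilityMeasure (EnvSp d) :=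
  ⟨empMeas ω s, empMeas_isProb ω (Nat.succ_ne_zero n) s⟩

/-- First marginal `(μ)_1` of a measure on `Ω_0 × 𝕌_d`. -/
def marg1 (μ : Measure (EnvSp d)) : Measure (Config d) := μ.map Prod.fst

/-- Second marginal `(μ)_2` of a measure on `Ω_0 × 𝕌_d`. -/
def marg2 (μ : Measure (EnvSp d)) : Measure (Config d) := μ.map (fun q => shift q.2.1 q.1)

/-- The slice `dμ(·, e)` of a measure on `Ω_0 × 𝕌_d` at a fixed step `e`. -/
def slice (μ : Measure (EnvSp d)) (e : Step d) : Measure (Config d) :=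
  (μ.restrict (Set.univ ×ˢ {e})).map Prod.fst

/-- The space `ℳ_1⋆`: probability measures on `Ω_0 × 𝕌_d` whose two marginals coincide and
are absolutely continuous w.r.t. `P₀`, and whose densities `dμ(ω,e)/d(μ)_1(ω)` are positive
precisely on open edges, `P₀`-a.s. -/
def M1star (d : ℕ) (P₀ : Measure (Config d)) : Set (ProbabilityMeasure (EnvSp d)) :=
  {μ | marg1 μ.toMeasure = marg2 μ.toMeasure ∧ marg1 μ.toMeasure ≪ P₀ ∧
    ∃ ρ : Step d → Config d → ℝ≥0∞, (∀ e, Measurable (ρ e)) ∧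
      (∀ e, slice μ.toMeasure e = (marg1 μ.toMeasure).withDensity (ρ e)) ∧
      (∀ e : Step d, ∀ᵐ ω ∂P₀, (0 < ρ e ω ↔ edgeOpen ω 0 e.1))}

/-- The reference measure `π_ω(0,e) d(μ)_1(ω)` on `Ω_0 × 𝕌_d`. -/
def refM (μ : Measure (EnvSp d)) : Measure (EnvSp d) :=
  Measure.sum (fun e : Step d =>
    ((marg1 μ).withDensity (fun ω => ENNReal.ofReal (trans ω 0 e.1))).map (fun ω => (ω, e)))

/-- `x log x - x + 1`. -/
def klFun (x : ℝ) : ℝ := x * Real.log x - x + 1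

open Classical in
/-- The entropy functional `ℑ` (a relative entropy with respect to `refM μ`;
it equals `∫ Σ_e dμ(ω,e) log[dμ(ω,e) / (d(μ)_1(ω) π_ω(0,e))]` on `ℳ_1⋆` and `∞` otherwise). -/
def entI (P₀ : Measure (Config d)) (μ : ProbabilityMeasure (EnvSp d)) : ℝ≥0∞ :=
  if μ ∈ M1star d P₀ ∧ μ.toMeasure ≪ refM μ.toMeasure then
    ∫⁻ q, ENNReal.ofReal (klFun ((μ.toMeasure.rnDeriv (refM μ.toMeasure)) q).toReal)
      ∂(refM μ.toMeasure)
  else ∞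

/-- The pairing `⟨f, μ⟩`. -/
def pairing (f : EnvSp d → ℝ) (μ : ProbabilityMeasure (EnvSp d)) : ℝ :=
  ∫ q, f q ∂μ.toMeasure

/-- The Fenchel–Legendre transform `ℑ⋆` of `ℑ`. -/
def entIstar (P₀ : Measure (Config d)) (f : BoundedContinuousFunction (EnvSp d) ℝ) : EReal :=
  ⨆ μ : ProbabilityMeasure (EnvSp d),
    ((pairing f μ : ℝ) : EReal) - ((entI P₀ μ : ℝ≥0∞) : EReal)

/-- The double Fenchel–Legendre transform `ℑ⋆⋆` of `ℑ`. -/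
def entIbis (P₀ : Measure (Config d)) (μ : ProbabilityMeasure (EnvSp d)) : EReal :=
  ⨆ f : BoundedContinuousFunction (EnvSp d) ℝ,
    ((pairing f μ : ℝ) : EReal) - entIstar P₀ f

/-- The contraction map `ξ(μ) = ∫ Σ_e e dμ(ω,e)`. -/
def xi (μ : ProbabilityMeasure (EnvSp d)) : Fin d → ℝ :=
  fun i => ∫ q, ((q.2.1 i : ℤ) : ℝ) ∂μ.toMeasure

/-- The mean velocity `X_n / n` of a trajectory. -/
def meanVel {n : ℕ} (s : Fin n → Step d) : Fin d → ℝ :=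
  fun i => (n : ℝ)⁻¹ * ((pos s n) i : ℝ)

/-- The class `Π̃` of environment transition kernels. -/
def PiT (d : ℕ) (P₀ : Measure (Config d)) : Set (Config d → Step d → ℝ) :=
  {κ | (∀ e : Step d, Measurable (fun ω => κ ω e)) ∧
    (∀ ω e, 0 ≤ κ ω e) ∧ (∀ e : Step d, ∀ᵐ ω ∂P₀, κ ω e ≤ 1) ∧
    (∀ᵐ ω ∂P₀, ∑ e : Step d, κ ω e = 1) ∧
    (∀ e : Step d, ∀ᵐ ω ∂P₀, (κ ω e = 0 ↔ trans ω 0 e.1 = 0))}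

/-- `φ dP₀` is an invariant probability density for the kernel `κ`. -/
def IsInvDensity (P₀ : Measure (Config d)) (κ : Config d → Step d → ℝ)
    (φ : Config d → ℝ) : Prop :=
  Measurable φ ∧ (∀ ω, 0 ≤ φ ω) ∧ (∫ ω, φ ω ∂P₀) = 1 ∧
    (∀ᵐ ω ∂P₀, φ ω = ∑ e : Step d, κ (shift (-e.1) ω) e * φ (shift (-e.1) ω))

/-- The set `ℰ` of pairs `(π̃, φ)`. -/
def Epairs (d : ℕ) (P₀ : Measure (Config d)) :
    Set ((Config d → Step d → ℝ) × (Config d → ℝ)) :=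
  {q | q.1 ∈ PiT d P₀ ∧ IsInvDensity P₀ q.1 q.2}

/-- The measure `dμ(ω,e) = π̃(ω,e) φ(ω) dP₀(ω)` associated with a pair `(π̃, φ)`. -/
def pairMeasure (P₀ : Measure (Config d)) (κ : Config d → Step d → ℝ)
    (φ : Config d → ℝ) : Measure (EnvSp d) :=
  Measure.sum (fun e : Step d =>
    (P₀.withDensity (fun ω => ENNReal.ofReal (κ ω e * φ ω))).map (fun ω => (ω, e)))

/-- The kernel `dμ/d(μ)_1` associated with a measure on `Ω_0 × 𝕌_d`. -/
def toKappa (μ : Measure (EnvSp d)) : Config d → Step d → ℝ :=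
  fun ω e => ((slice μ e).rnDeriv (marg1 μ) ω).toReal

/-- The density `d(μ)_1/dP₀` associated with a measure on `Ω_0 × 𝕌_d`. -/
def toPhi (P₀ : Measure (Config d)) (μ : Measure (EnvSp d)) : Config d → ℝ :=
  fun ω => ((marg1 μ).rnDeriv P₀ ω).toReal

/-- The environment Markov transition operator `R_κ`. -/
def kernelStep (κ : Config d → Step d → ℝ) (f : Config d → ℝ) : Config d → ℝ :=
  fun ω => ∑ e : Step d, κ ω e * f (shift e.1 ω)

/-- `Q` is an invariant measure for the environment kernel `R_κ`. -/
def IsInvariant (κ : Config d → Step d → ℝ) (Q : Measure (Config d)) : Prop :=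
  ∀ f : Config d → ℝ, Measurable f → (∃ C, ∀ ω, |f ω| ≤ C) →
    ∫ ω, kernelStep κ f ω ∂Q = ∫ ω, f ω ∂Q

/-- Partial sum `Σ_{k<m} f(τ_{X_k}ω, X_{k+1}-X_k)` along a trajectory of length `N`. -/
def partialSumF (f : EnvSp d → ℝ) (ω : Config d) {N : ℕ} (s : Fin N → Step d) (m : ℕ) : ℝ :=
  ∑ k ∈ Finset.univ.filter (fun k : Fin N => (k : ℕ) < m), f (envPair ω s k)

/-- The sum of `G` along the path `γ` up to time `n`. -/
def pathSum (G : Config d → V d → ℝ) (ω : Config d) (γ : ℕ → V d) (n : ℕ) : ℝ :=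
  ∑ k ∈ Finset.range n, G (shift (γ k) ω) (γ (k + 1) - γ k)

/-- The class `𝒢_∞` of gradients: zero mean, uniformly bounded, closed loops. -/
def Ginfty (d : ℕ) (P₀ : Measure (Config d)) : Set (Config d → V d → ℝ) :=
  {G | (∀ e ∈ Ud d, Measurable (fun ω => G ω e)) ∧
    (∀ e ∈ Ud d, ∫ ω, G ω e ∂P₀ = 0) ∧
    (∃ M : ℝ, ∀ e ∈ Ud d, ∀ᵐ ω ∂P₀, |G ω e| ≤ M) ∧
    (∀ᵐ ω ∂P₀, ∀ (γ : ℕ → V d) (n : ℕ),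
      memCluster ω (γ 0) → IsOpenPath ω γ n → γ n = γ 0 → pathSum G ω γ n = 0)}

open Classical in
/-- The corrector `Ψ(ω,x)`: the sum of `G` along some open path from `0` to `x`. -/
def corr (G : Config d → V d → ℝ) (ω : Config d) (x : V d) : ℝ :=
  if h : ∃ q : (ℕ → V d) × ℕ, q.1 0 = 0 ∧ q.1 q.2 = x ∧ IsOpenPath ω q.1 q.2
  then pathSum G ω h.choose.1 h.choose.2 else 0

/-- The chemical distance: minimal length of an open path joining `x` and `y`. -/
def chemDist (ω : Config d) (x y : V d) : ℕ :=
  sInf {n : ℕ | ∃ γ : ℕ → V d, γ 0 = x ∧ γ n = y ∧ IsOpenPath ω γ n}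

open Classical in
/-- The functional `Λ(f,G)`. -/
def Lam (P₀ : Measure (Config d)) (f : EnvSp d → ℝ) (G : Config d → V d → ℝ) : EReal :=
  essSup (fun ω => ((Real.log (∑ e : Step d,
    if edgeOpen ω 0 e.1 then trans ω 0 e.1 * Real.exp (f (ω, e) + G ω e.1) else 0)) : EReal)) P₀

/-- The variational formula `H̄(f) = sup_{μ ∈ ℳ_1⋆} {⟨f,μ⟩ - ℑ(μ)}`. -/
def Hbar (P₀ : Measure (Config d)) (f : EnvSp d → ℝ) : EReal :=
  ⨆ μ ∈ M1star d P₀, ((pairing f μ : ℝ) : EReal) - ((entI P₀ μ : ℝ≥0∞) : EReal)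

/-- The finite σ-algebra `𝓑_k` recording all bonds in the box of size `k` around the origin. -/
def Bsig (d k : ℕ) : MeasurableSpace (Config d) :=
  MeasurableSpace.comap
    (fun (ω : Config d) (b : {b : EdgeIx d // ∀ i, |b.1 i| ≤ (k : ℤ)}) => ω b.1) inferInstance

end SRWPC

/-!
For an environment law `Q` that is reversible under crossing an open bond, every choice of
direction-dependent conductances `c e = c (-e)` turns `1{ω(e) = 1} c(e) dQ(ω)` into a measure with
equal marginals. If all `c e` are positive, its normalization lies in `ℳ_1⋆`, and its entropy is at
most a constant depending only on `d`, since `π_ω(0,e) ≥ 1/(2d)` on open bonds bounds the density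
with respect to the reference measure. If only the conductances `c e₀ = c (-e₀)` are positive, the
measure gives no mass to the step `e₁`, although with positive probability `e₀` and `e₁` are both
open, so its entropy is `∞`. Letting the conductances off the axis of `e₀` tend to `0` passes from
the first case to the second. On the other hand `ℑ⋆⋆` is a supremum of functions that are
continuous for the weak topology.
-/

namespace SRWPC

variable {d : ℕ}

section Cylinders

variable {ι : Type*}

/-- The cylinder event that every coordinate in `F` is open. Since these events form a generating
π-system, finite measures on configurations may be compared on them alone. -/
def openCylinder (F : Finset ι) : Set (ι → Bool) := {ω | ∀ b ∈ F, ω b = true}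

lemma measurableSet_openCylinder (F : Finset ι) : MeasurableSet (openCylinder F) :=
  MeasurableSet.pi (t := fun _ : ι => {true}) F.countable_toSet fun _ _ => .singleton true

lemma openCylinder_map {κ : Type*} (f : ι ↪ κ) (F : Finset ι) :
    openCylinder (F.map f) = (fun ω b => ω (f b)) ⁻¹' openCylinder F :=
  Set.ext fun _ => Finset.forall_mem_map

lemma openCylinder_inter_openCylinder [DecidableEq ι] (F G : Finset ι) :
    openCylinder F ∩ openCylinder G = openCylinder (F ∪ G) :=
  Set.ext fun _ => Finset.forall_mem_union.symm

lemma isPiSystem_range_openCylinder :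
    IsPiSystem (Set.range (openCylinder : Finset ι → Set (ι → Bool))) := by
  classical
  rintro _ ⟨F, rfl⟩ _ ⟨G, rfl⟩ _
  exact ⟨F ∪ G, (openCylinder_inter_openCylinder F G).symm⟩

lemma generateFrom_range_openCylinder :
    MeasurableSpace.generateFrom (Set.range (openCylinder : Finset ι → Set (ι → Bool))) =
      MeasurableSpace.pi := by
  refine le_antisymm (MeasurableSpace.generateFrom_le ?_) (iSup_le fun b => ?_)
  · rintro _ ⟨F, rfl⟩
    exact measurableSet_openCylinder F
  · rw [← measurable_iff_comap_le]
    refine @measurable_to_bool _ (MeasurableSpace.generateFrom _) _ ?_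
    refine MeasurableSpace.measurableSet_generateFrom ⟨{b}, ?_⟩
    ext ω
    simp [openCylinder]

lemma ext_of_openCylinder {μ ν : Measure (ι → Bool)} [IsFiniteMeasure μ]
    (h : ∀ F : Finset ι, μ (openCylinder F) = ν (openCylinder F)) : μ = ν := by
  refine ext_of_generate_finite _ generateFrom_range_openCylinder.symm
    isPiSystem_range_openCylinder (by rintro _ ⟨F, rfl⟩; exact h F) ?_
  simpa [openCylinder] using h ∅

lemma piecewise_top_preimage_openCylinder [DecidableEq ι] (F G : Finset ι) :
    (fun ω : ι → Bool => F.piecewise ⊤ ω) ⁻¹' openCylinder G = openCylinder (G \ F) := by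
  ext ω
  simp only [openCylinder, Set.mem_preimage, Set.mem_ofPred_eq, Finset.mem_sdiff]
  refine forall_congr' fun b => ?_
  by_cases hb : b ∈ F <;> simp [hb]

lemma measurable_piecewise_top [DecidableEq ι] (F : Finset ι) :
    Measurable fun ω : ι → Bool => F.piecewise ⊤ ω :=
  measurable_pi_lambda _ fun b => by
    by_cases hb : b ∈ F
    · simp only [Finset.piecewise_eq_of_mem _ _ _ hb, measurable_const]
    · simpa only [Finset.piecewise_eq_of_notMem _ _ _ hb] using measurable_pi_apply b

lemma measurable_inf_bool :
    Measurable fun z : (ι → Bool) × (ι → Bool) => z.1 ⊓ z.2 :=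
  measurable_pi_lambda _ fun b => by
    have hb : Measurable fun z : (ι → Bool) × (ι → Bool) => (z.1 b, z.2 b) := by fun_prop
    exact (measurable_of_countable fun z : Bool × Bool => z.1 ⊓ z.2).comp hb

lemma inf_preimage_openCylinder (F : Finset ι) :
    (fun z : (ι → Bool) × (ι → Bool) => z.1 ⊓ z.2) ⁻¹' openCylinder F =
      openCylinder F ×ˢ openCylinder F := by
  ext z
  simp [openCylinder, forall_and]

end Cylinders

section Bernoulli

variable {q : ℝ} {P : Measure (Config d)}

lemma IsBernoulli.measure_openCylinder (hP : IsBernoulli d q P) (F : Finset (EdgeIx d)) :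
    P (openCylinder F) = ENNReal.ofReal q ^ F.card := by
  calc
    P (openCylinder F) = ∏ _b ∈ F, ENNReal.ofReal q := hP.2 F fun _ => true
    _ = ENNReal.ofReal q ^ F.card := Finset.prod_const _

lemma exists_isBernoulli (hq : q ∈ Set.Icc (0 : ℝ) 1) :
    ∃ P : Measure (Config d), IsBernoulli d q P := by
  let m : Measure Bool := bernoulliMeasure true false ⟨q, hq⟩
  refine ⟨Measure.infinitePi fun _ => m, inferInstance, fun F a => ?_⟩
  have hpi := Measure.infinitePi_pi (μ := fun _ : EdgeIx d => m) (s := F) (t := fun b => {a b})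
    fun _ _ => .singleton _
  calc
    _ = ∏ b ∈ F, m {a b} := hpi
    _ = _ := Finset.prod_congr rfl fun b _ => by
      cases a b
      · rw [bernoulliMeasure_apply_of_notMem_of_mem _ (.singleton _) Bool.false_ne_true.symm rfl]
        simp [← ENNReal.ofReal_coe_nnreal]
      · rw [bernoulliMeasure_apply_of_mem_of_notMem _ (.singleton _) rfl Bool.false_ne_true]
        simp [← ENNReal.ofReal_coe_nnreal]

lemma measurable_shift (x : V d) : Measurable (shift x : Config d → Config d) :=
  measurable_pi_lambda _ fun _ => measurable_pi_apply _

lemma IsBernoulli.map_shift (hP : IsBernoulli d q P) (x : V d) : P.map (shift x) = P := by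
  have := hP.1
  let translate : EdgeIx d ↪ EdgeIx d :=
    ⟨fun b => (b.1 + x, b.2), fun b c h => by simpa [Prod.ext_iff] using h⟩
  have hpre (F : Finset (EdgeIx d)) :
      shift x ⁻¹' openCylinder F = openCylinder (F.map translate) :=
    (openCylinder_map translate F).symm
  refine ext_of_openCylinder fun F => ?_
  rw [Measure.map_apply (measurable_shift x) (measurableSet_openCylinder F), hpre,
    hP.measure_openCylinder, hP.measure_openCylinder, Finset.card_map]

lemma IsBernoulli.restrict_openCylinder (hP : IsBernoulli d q P) (F : Finset (EdgeIx d)) :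
    P.restrict (openCylinder F) =
      ENNReal.ofReal q ^ F.card • P.map fun ω => F.piecewise ⊤ ω := by
  have := hP.1
  refine ext_of_openCylinder fun G => ?_
  rw [Measure.restrict_apply (measurableSet_openCylinder G), openCylinder_inter_openCylinder,
    Measure.smul_apply, Measure.map_apply (measurable_piecewise_top F)
      (measurableSet_openCylinder G), piecewise_top_preimage_openCylinder,
    hP.measure_openCylinder, hP.measure_openCylinder, smul_eq_mul, ← pow_add,
    ← Finset.card_sdiff_add_card, add_comm]

lemma IsBernoulli.measure_inter_openCylinder_pos (hP : IsBernoulli d q P) (hq : 0 < q)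
    {A : Set (Config d)} (hA : MeasurableSet A) (hup : IsUpperSet A) (hpos : 0 < P A)
    (F : Finset (EdgeIx d)) : 0 < P (A ∩ openCylinder F) := by
  have hsub : A ⊆ (fun ω => F.piecewise ⊤ ω) ⁻¹' A := fun ω hω =>
    hup (Finset.le_piecewise_of_le_of_le F le_top le_rfl) hω
  rw [← Measure.restrict_apply hA, hP.restrict_openCylinder, Measure.smul_apply,
    Measure.map_apply (measurable_piecewise_top F) hA, smul_eq_mul]
  exact ENNReal.mul_pos (pow_ne_zero _ (ENNReal.ofReal_pos.2 hq).ne')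
    (hpos.trans_le (measure_mono hsub)).ne'

lemma IsBernoulli.measure_le_of_isUpperSet {p : ℝ} {P' : Measure (Config d)}
    (hP : IsBernoulli d q P) (hP' : IsBernoulli d p P') (hq : 0 ≤ q) (hqp : q ≤ p)
    {A : Set (Config d)} (hA : MeasurableSet A) (hup : IsUpperSet A) : P A ≤ P' A := by
  have hp : 0 ≤ p := hq.trans hqp
  obtain ⟨R, hR⟩ := exists_isBernoulli (d := d) (q := q / p)
    ⟨div_nonneg hq hp, div_le_one_of_le₀ hqp hp⟩
  have := hP.1
  have := hP'.1
  have := hR.1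
  -- Intersecting two independent configurations of parameters `p` and `q / p` thins `p` to `q`.
  have hthin : P = (P'.prod R).map fun z => z.1 ⊓ z.2 := ext_of_openCylinder fun F => by
    rw [Measure.map_apply measurable_inf_bool (measurableSet_openCylinder F),
      inf_preimage_openCylinder, Measure.prod_prod, hP.measure_openCylinder,
      hP'.measure_openCylinder, hR.measure_openCylinder, ← mul_pow, ← ENNReal.ofReal_mul hp,
      mul_div_cancel_of_imp' fun h => le_antisymm (h ▸ hqp) hq]
  calc
    P A = (P'.prod R) ((fun z => z.1 ⊓ z.2) ⁻¹' A) := by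
      rw [hthin, Measure.map_apply measurable_inf_bool hA]
    _ ≤ (P'.prod R) (A ×ˢ Set.univ) :=
      measure_mono fun z hz => ⟨hup inf_le_left hz, Set.mem_univ _⟩
    _ = P' A := by rw [Measure.prod_prod, measure_univ, mul_one]

lemma IsBernoulli.eq_dirac_top (hP : IsBernoulli d 1 P) : P = Measure.dirac ⊤ := by
  have := hP.1
  refine ext_of_openCylinder fun F => ?_
  have htop : (⊤ : Config d) ∈ openCylinder F := fun _ _ => rfl
  rw [hP.measure_openCylinder, Measure.dirac_apply_of_mem htop, ENNReal.ofReal_one, one_pow]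

end Bernoulli

section Cluster

variable {ω : Config d} {x e : V d}

lemma mem_Ud : e ∈ Ud d ↔ ∃ i, e = unitVec d i ∨ e = -unitVec d i := by
  simp only [Ud, Finset.mem_union, Finset.mem_image, Finset.mem_univ, true_and, exists_or,
    eq_comm]

lemma neg_mem_Ud (he : e ∈ Ud d) : -e ∈ Ud d := by
  obtain ⟨i, rfl | rfl⟩ := mem_Ud.1 he
  · exact mem_Ud.2 ⟨i, Or.inr rfl⟩
  · exact mem_Ud.2 ⟨i, Or.inl (neg_neg _)⟩

instance : InvolutiveNeg (Step d) where
  neg e := ⟨-e.1, neg_mem_Ud e.2⟩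
  neg_neg e := Subtype.ext (neg_neg e.1)

lemma isOpen_edgeOpen (x e : V d) : IsOpen {ω : Config d | edgeOpen ω x e} := by
  have hcoord (b : EdgeIx d) : IsOpen {ω : Config d | ω b = true} :=
    (isOpen_discrete ({true} : Set Bool)).preimage (continuous_apply (A := fun _ => Bool) b)
  simp only [edgeOpen, Set.ofPred_exists, Set.ofPred_or, Set.ofPred_and]
  exact isOpen_iUnion fun i =>
    (isOpen_const.inter (hcoord _)).union (isOpen_const.inter (hcoord _))

lemma isOpen_isOpenPath (γ : ℕ → V d) (n : ℕ) : IsOpen {ω : Config d | IsOpenPath ω γ n} := by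
  have hfin : {ω : Config d | IsOpenPath ω γ n} = ⋂ k ∈ Finset.range n,
      {ω | γ (k + 1) - γ k ∈ Ud d ∧ edgeOpen ω (γ k) (γ (k + 1) - γ k)} := by
    ext ω
    simp [IsOpenPath]
  rw [hfin]
  exact isOpen_biInter_finset fun k _ => isOpen_const.inter (isOpen_edgeOpen _ _)

lemma measurableSet_cluZero : MeasurableSet (cluZero d) := by
  have hclu : cluZero d = ⋂ R : ℕ, ⋃ (γ : ℕ → V d) (n : ℕ),
      {ω | γ 0 = 0 ∧ IsOpenPath ω γ n ∧ ¬ inBox (γ n) R} := by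
    ext ω
    simp [cluZero, memCluster]
  rw [hclu]
  refine MeasurableSet.iInter fun R => IsOpen.measurableSet ?_
  exact isOpen_iUnion fun γ => isOpen_iUnion fun n =>
    isOpen_const.inter ((isOpen_isOpenPath γ n).inter isOpen_const)

lemma edgeOpen_mono {ω ω' : Config d} (h : ω ≤ ω') (ho : edgeOpen ω x e) : edgeOpen ω' x e :=
  ho.imp fun _ => Or.imp (And.imp_right (Bool.le_iff_imp.1 (h _)))
    (And.imp_right (Bool.le_iff_imp.1 (h _)))

lemma isUpperSet_cluZero : IsUpperSet (cluZero d) := fun _ _ h hω R =>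
  let ⟨γ, n, h0, hγ, hn⟩ := hω R
  ⟨γ, n, h0, fun k hk => (hγ k hk).imp_right (edgeOpen_mono h), hn⟩

lemma edgeOpen_shift {y : V d} : edgeOpen (shift y ω) x e ↔ edgeOpen ω (x + y) e := by
  simp only [edgeOpen, shift, sub_add_eq_add_sub]

lemma edgeOpen_reverse (h : edgeOpen ω x e) : edgeOpen ω (x + e) (-e) := by
  obtain ⟨i, ⟨rfl, hi⟩ | ⟨rfl, hi⟩⟩ := h
  · exact ⟨i, Or.inr ⟨rfl, by rwa [add_sub_cancel_right]⟩⟩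
  · exact ⟨i, Or.inl ⟨neg_neg _, by rwa [← sub_eq_add_neg]⟩⟩

lemma edgeOpen_reverse_iff : edgeOpen ω (x + e) (-e) ↔ edgeOpen ω x e :=
  ⟨fun h => by simpa using edgeOpen_reverse h, edgeOpen_reverse⟩

lemma inBox_add {x y : V d} {r s : ℝ} (hx : inBox x r) (hy : inBox y s) :
    inBox (x + y) (r + s) := fun i => by
  rw [Pi.add_apply, Int.cast_add]
  exact (abs_add_le _ _).trans (add_le_add (hx i) (hy i))

lemma exists_inBox (x : V d) : ∃ R : ℕ, inBox x R := by
  refine ⟨∑ i, (x i).natAbs, fun i => ?_⟩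
  rw [← Int.cast_abs, Int.abs_eq_natAbs, Int.cast_natCast, Nat.cast_le]
  exact Finset.single_le_sum (f := fun i => (x i).natAbs) (fun _ _ => Nat.zero_le _)
    (Finset.mem_univ i)

lemma memCluster_shift {y : V d} (h : memCluster ω (x + y)) : memCluster (shift y ω) x := by
  intro R
  obtain ⟨M, hM⟩ := exists_inBox y
  obtain ⟨γ, n, h0, hγ, hn⟩ := h (R + M)
  refine ⟨fun k => γ k - y, n, sub_eq_of_eq_add h0, fun k hk => ?_, fun hbox => hn ?_⟩
  · rw [sub_sub_sub_cancel_right, edgeOpen_shift, sub_add_cancel]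
    exact hγ k hk
  · simpa using inBox_add hbox hM

lemma shift_neg_shift (y : V d) (ω : Config d) : shift (-y) (shift y ω) = ω :=
  funext fun b => by simp [shift]

lemma memCluster_shift_iff {y : V d} : memCluster (shift y ω) x ↔ memCluster ω (x + y) :=
  ⟨fun h => shift_neg_shift y ω ▸ memCluster_shift (by rwa [add_neg_cancel_right]),
    memCluster_shift⟩

lemma memCluster_of_edgeOpen (he : e ∈ Ud d) (ho : edgeOpen ω x e) (h : memCluster ω (x + e)) :
    memCluster ω x := by
  intro R
  obtain ⟨γ, n, h0, hγ, hn⟩ := h R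
  refine ⟨fun k => k.casesOn x γ, n + 1, rfl, fun k hk => ?_, hn⟩
  cases k with
  | zero =>
    change γ 0 - x ∈ Ud d ∧ edgeOpen ω x (γ 0 - x)
    rw [h0, add_sub_cancel_left]
    exact ⟨he, ho⟩
  | succ k => exact hγ k (Nat.lt_of_succ_lt_succ hk)

lemma memCluster_iff_of_edgeOpen (he : e ∈ Ud d) (ho : edgeOpen ω x e) :
    memCluster ω (x + e) ↔ memCluster ω x :=
  ⟨memCluster_of_edgeOpen he ho, fun h =>
    memCluster_of_edgeOpen (neg_mem_Ud he) (edgeOpen_reverse ho) (by rwa [add_neg_cancel_right])⟩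

/-- The event that the bond from the origin in the direction of the step `e` is open. -/
def openBond (e : Step d) : Set (Config d) := {ω | edgeOpen ω 0 e.1}

lemma measurableSet_openBond (e : Step d) : MeasurableSet (openBond e) :=
  (isOpen_edgeOpen 0 e.1).measurableSet

lemma shift_preimage_openBond_neg (e : Step d) : shift e.1 ⁻¹' openBond (-e) = openBond e :=
  Set.ext fun _ => edgeOpen_shift.trans edgeOpen_reverse_iff

lemma shift_preimage_cluZero_inter_openBond (e : Step d) :
    shift e.1 ⁻¹' cluZero d ∩ openBond e = cluZero d ∩ openBond e :=
  Set.ext fun _ => and_congr_left fun ho =>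
    memCluster_shift_iff.trans (memCluster_iff_of_edgeOpen e.2 ho)

lemma top_mem_cluZero [Nonempty (Fin d)] : (⊤ : Config d) ∈ cluZero d := by
  intro R
  obtain ⟨i⟩ := ‹Nonempty (Fin d)›
  refine ⟨fun k => k • unitVec d i, R + 1, zero_smul _ _, fun k _ => ?_, fun hbox => ?_⟩
  · simp only [add_smul, one_smul, add_sub_cancel_left]
    exact ⟨mem_Ud.2 ⟨i, Or.inl rfl⟩, i, Or.inl ⟨rfl, rfl⟩⟩
  · have hi : (R : ℝ) + 1 ≤ R := by simpa [unitVec] using (le_abs_self _).trans (hbox i)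
    exact (lt_add_one _).not_ge hi

lemma IsBernoulli.measure_cluZero_pos [Nonempty (Fin d)] {p : ℝ} (hpc : pc d < p)
    {P : Measure (Config d)} (hP : IsBernoulli d p P) : 0 < P (cluZero d) := by
  have hone : ∀ R : Measure (Config d), IsBernoulli d 1 R → 0 < R (cluZero d) := fun R hR => by
    rw [hR.eq_dirac_top, Measure.dirac_apply_of_mem top_mem_cluZero]
    exact zero_lt_one
  obtain ⟨q, ⟨hq01, hq⟩, hqp⟩ :=
    exists_lt_of_csInf_lt (by exact ⟨1, ⟨zero_le_one, le_rfl⟩, hone⟩) hpc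
  obtain ⟨R, hR⟩ := exists_isBernoulli (d := d) hq01
  exact (hq R hR).trans_le
    (hR.measure_le_of_isUpperSet hP hq01.1 hqp.le measurableSet_cluZero isUpperSet_cluZero)

end Cluster

section Reversibility

/-- Detailed balance of the environment seen from a walk crossing only open bonds: moving the
origin along an open bond carries `Q` on that event to `Q` on the event of the reversed bond. -/
def IsEdgeReversible (Q : Measure (Config d)) : Prop :=
  ∀ e : Step d, (Q.restrict (openBond e)).map (shift e.1) = Q.restrict (openBond (-e))

lemma isEdgeReversible_cond_cluZero {P : Measure (Config d)} (hP : ∀ x, P.map (shift x) = P) :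
    IsEdgeReversible P[|cluZero d] := by
  intro e
  have hpre : shift e.1 ⁻¹' (openBond (-e) ∩ cluZero d) = openBond e ∩ cluZero d := by
    rw [Set.inter_comm, Set.preimage_inter, shift_preimage_openBond_neg,
      shift_preimage_cluZero_inter_openBond, Set.inter_comm]
  have hrev : (P.restrict (openBond e ∩ cluZero d)).map (shift e.1) =
      P.restrict (openBond (-e) ∩ cluZero d) := by
    rw [← hpre, ← Measure.restrict_map (measurable_shift e.1)
      ((measurableSet_openBond (-e)).inter measurableSet_cluZero), hP]
  simp only [ProbabilityTheory.cond, Measure.restrict_smul, Measure.map_smul,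
    Measure.restrict_restrict (measurableSet_openBond _), hrev]

/-- The step `eᵢ`, as an element of `Step d`. -/
def coordStep (i : Fin d) : Step d := ⟨unitVec d i, mem_Ud.2 ⟨i, Or.inl rfl⟩⟩

lemma coordStep_injective : Function.Injective (coordStep : Fin d → Step d) := fun i j h => by
  have hi := congrFun (congrArg Subtype.val h) i
  simp only [coordStep, unitVec, if_true] at hi
  by_contra hij
  simp [hij] at hi

lemma coordStep_ne_neg_coordStep (i j : Fin d) : coordStep i ≠ -coordStep j := fun h => by
  have hi : unitVec d i i = -unitVec d j i := congrFun (congrArg Subtype.val h) i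
  by_cases hij : i = j <;> simp [unitVec, hij] at hi

lemma openCylinder_subset_openBond {F : Finset (EdgeIx d)} {i : Fin d} (hi : (0, i) ∈ F) :
    openCylinder F ⊆ openBond (coordStep i) :=
  fun _ hω => ⟨i, Or.inl ⟨rfl, hω _ hi⟩⟩

lemma IsBernoulli.cond_openBond_inter_pos [Nonempty (Fin d)] {p : ℝ} (hp : 0 < p)
    (hpc : pc d < p) {P : Measure (Config d)} (hP : IsBernoulli d p P) (i j : Fin d) :
    0 < P[|cluZero d] (openBond (coordStep i) ∩ openBond (coordStep j)) := by
  have := hP.1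
  have hsub : openCylinder {(0, i), (0, j)} ⊆ openBond (coordStep i) ∩ openBond (coordStep j) :=
    Set.subset_inter (openCylinder_subset_openBond (by simp))
      (openCylinder_subset_openBond (by simp))
  have hpos := hP.measure_inter_openCylinder_pos hp measurableSet_cluZero isUpperSet_cluZero
    (hP.measure_cluZero_pos hpc) {(0, i), (0, j)}
  exact (cond_pos_of_inter_ne_zero measurableSet_cluZero hpos.ne').trans_le (measure_mono hsub)

end Reversibility

section Slices

/-- The measure on `Ω × 𝕌_d` with prescribed slices `m e`. -/
def ofSlices (m : Step d → Measure (Config d)) : Measure (EnvSp d) :=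
  ∑ e, (m e).map fun ω => (ω, e)

variable (m : Step d → Measure (Config d)) (μ : Measure (EnvSp d)) (e : Step d)

lemma measurable_shift_snd : Measurable fun z : EnvSp d => shift z.2.1 z.1 :=
  measurable_from_prod_countable_left fun e => measurable_shift e.1

lemma map_ofSlices {β : Type*} [MeasurableSpace β] {f : EnvSp d → β} (hf : Measurable f) :
    (ofSlices m).map f = ∑ e, (m e).map fun ω => f (ω, e) := by
  simp only [← Measure.mapₗ_apply_of_measurable hf, ofSlices, map_sum]
  simp only [Measure.mapₗ_apply_of_measurable hf, Measure.map_map hf measurable_prodMk_right,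
    Function.comp_def]

lemma marg1_ofSlices : marg1 (ofSlices m) = ∑ e, m e := by
  simp only [marg1, map_ofSlices m measurable_fst, Measure.map_id']

lemma marg2_ofSlices : marg2 (ofSlices m) = ∑ e, (m e).map (shift e.1) :=
  map_ofSlices m measurable_shift_snd

lemma slice_apply {A : Set (Config d)} (hA : MeasurableSet A) :
    slice μ e A = μ (A ×ˢ {e}) := by
  rw [slice, Measure.map_apply measurable_fst hA, Measure.restrict_apply (measurable_fst hA)]
  congr 1
  ext
  simp

lemma slice_le_marg1 : slice μ e ≤ marg1 μ :=
  Measure.map_mono Measure.restrict_le_self measurable_fst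

lemma ofSlices_apply {A : Set (EnvSp d)} (hA : MeasurableSet A) :
    ofSlices m A = ∑ e, m e ((fun ω => (ω, e)) ⁻¹' A) := by
  simp only [ofSlices, Measure.finsetSum_apply, Measure.map_apply measurable_prodMk_right hA]

lemma slice_ofSlices : slice (ofSlices m) e = m e := by
  ext A hA
  rw [slice_apply _ _ hA, ofSlices_apply _ (hA.prod (.singleton e)), Finset.sum_eq_single e]
  · simp [Set.mk_preimage_prod_left]
  · intro e' _ he'
    simp [Set.mk_preimage_prod_left_eq_empty, he']
  · simp

lemma ofSlices_slice : ofSlices (slice μ) = μ := by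
  ext A hA
  have hsplit : A = ⋃ e, ((fun ω => (ω, e)) ⁻¹' A) ×ˢ {e} := by
    ext ⟨ω, e⟩
    simp
  conv_rhs => rw [hsplit]
  rw [ofSlices_apply _ hA, measure_iUnion, tsum_fintype]
  · exact Finset.sum_congr rfl fun e _ => slice_apply μ e (measurable_prodMk_right hA)
  · exact fun e e' h => Set.disjoint_prod.2 (Or.inr (Set.disjoint_singleton.2 h))
  · exact fun e => (measurable_prodMk_right hA).prod (.singleton e)

variable {m} in
lemma ofSlices_mono {m' : Step d → Measure (Config d)} (h : ∀ e, m e ≤ m' e) :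
    ofSlices m ≤ ofSlices m' :=
  Finset.sum_le_sum fun e _ => Measure.map_mono (h e) measurable_prodMk_right

lemma ofSlices_smul (c : ℝ≥0∞) : ofSlices (fun e => c • m e) = c • ofSlices m := by
  simp only [ofSlices, Measure.map_smul, Finset.smul_sum]

lemma refM_eq_ofSlices : refM μ =
    ofSlices fun e => (marg1 μ).withDensity fun ω => ENNReal.ofReal (trans ω 0 e.1) :=
  Measure.sum_fintype _

end Slices

section EntropyBound

lemma rnDeriv_le_of_le_smul {α : Type*} [MeasurableSpace α] {μ ν : Measure α} [SigmaFinite ν]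
    {K : ℝ≥0∞} (h : μ ≤ K • ν) : μ.rnDeriv ν ≤ᵐ[ν] fun _ => K :=
  ae_le_of_forall_setLIntegral_le_of_sigmaFinite (Measure.measurable_rnDeriv _ _) fun s _ _ =>
    calc
      ∫⁻ x in s, μ.rnDeriv ν x ∂ν ≤ μ s := Measure.setLIntegral_rnDeriv_le s
      _ ≤ K * ν s := h s
      _ = ∫⁻ _ in s, K ∂ν := (setLIntegral_const s K).symm

lemma klFun_le {x K : ℝ} (h0 : 0 ≤ x) (hK : x ≤ K) : klFun x ≤ K ^ 2 + 1 := by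
  have hlog : x * Real.log x ≤ x * x := mul_le_mul_of_nonneg_left (Real.log_le_self h0) h0
  unfold klFun
  nlinarith

lemma trans_le_one (ω : Config d) (x e : V d) : trans ω x e ≤ 1 := by
  unfold trans
  split_ifs
  · rw [one_div]
    exact Nat.cast_inv_le_one _
  · exact zero_le_one

lemma one_le_card_mul_trans {ω : Config d} {x e : V d} (he : e ∈ Ud d) (h : edgeOpen ω x e) :
    1 ≤ (Ud d).card * trans ω x e := by
  classical
  have hle : openDeg ω x ≤ (Ud d).card := Finset.card_filter_le _ _
  have hpos : 0 < openDeg ω x := Finset.card_pos.2 ⟨e, Finset.mem_filter.2 ⟨he, h⟩⟩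
  rw [trans, if_pos h, mul_one_div, one_le_div (Nat.cast_pos.2 hpos)]
  exact Nat.cast_le.2 hle

variable {P₀ : Measure (Config d)} {μ : ProbabilityMeasure (EnvSp d)}

lemma exists_density_of_mem_M1star (hμ : μ ∈ M1star d P₀) (e : Step d) :
    ∃ ρ : Config d → ℝ≥0∞, Measurable ρ ∧ slice μ e = (marg1 μ).withDensity ρ ∧
      ∀ᵐ ω ∂marg1 μ, ρ ω ≠ 0 ↔ ω ∈ openBond e := by
  obtain ⟨-, hac, ρ, hρ, hslice, hpos⟩ := hμ
  refine ⟨ρ e, hρ e, hslice e, ?_⟩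
  filter_upwards [hac.ae_le (hpos e)] with ω hω
  exact pos_iff_ne_zero.symm.trans hω

lemma marg1_openBond_eq_zero_of_slice_eq_zero (hμ : μ ∈ M1star d P₀) {e : Step d}
    (h : slice (μ : Measure (EnvSp d)) e = 0) : marg1 (μ : Measure (EnvSp d)) (openBond e) = 0 := by
  obtain ⟨ρ, hρ, hslice, hopen⟩ := exists_density_of_mem_M1star hμ e
  rw [hslice, withDensity_eq_zero_iff hρ.aemeasurable] at h
  rw [measure_eq_zero_iff_ae_notMem]
  filter_upwards [h, hopen] with ω hω hopen
  exact mt hopen.2 (not_not.2 hω)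

lemma slice_le_of_mem_M1star (hμ : μ ∈ M1star d P₀) (e : Step d) :
    slice (μ : Measure (EnvSp d)) e ≤ ((Ud d).card : ℝ≥0∞) •
      (marg1 (μ : Measure (EnvSp d))).withDensity fun ω => ENNReal.ofReal (trans ω 0 e.1) := by
  obtain ⟨ρ, hρ, hslice, hopen⟩ := exists_density_of_mem_M1star hμ e
  have hmem : ∀ᵐ ω ∂slice (μ : Measure (EnvSp d)) e, ω ∈ openBond e := by
    rw [hslice, ae_withDensity_iff hρ]
    exact hopen.mono fun _ => Iff.mp
  have hind : (openBond e).indicator 1 ≤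
      ((Ud d).card : ℝ≥0∞) • fun ω : Config d => ENNReal.ofReal (trans ω 0 e.1) := by
    refine Set.indicator_le fun ω hω => ?_
    rw [Pi.smul_apply, smul_eq_mul, ← ENNReal.ofReal_natCast,
      ← ENNReal.ofReal_mul (Nat.cast_nonneg _)]
    exact ENNReal.one_le_ofReal.2 (one_le_card_mul_trans e.2 hω)
  calc
    slice (μ : Measure (EnvSp d)) e = (slice (μ : Measure (EnvSp d)) e).restrict (openBond e) :=
      (Measure.restrict_eq_self_of_ae_mem hmem).symm
    _ ≤ (marg1 (μ : Measure (EnvSp d))).restrict (openBond e) :=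
      Measure.restrict_mono le_rfl (slice_le_marg1 _ e)
    _ = (marg1 (μ : Measure (EnvSp d))).withDensity ((openBond e).indicator 1) :=
      (withDensity_indicator_one (measurableSet_openBond e)).symm
    _ ≤ _ := withDensity_mono (Eventually.of_forall hind)
    _ = _ := withDensity_smul' _ _ (ENNReal.natCast_ne_top _)

lemma le_smul_refM_of_mem_M1star (hμ : μ ∈ M1star d P₀) :
    (μ : Measure (EnvSp d)) ≤ ((Ud d).card : ℝ≥0∞) • refM (μ : Measure (EnvSp d)) := by
  rw [refM_eq_ofSlices, ← ofSlices_smul]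
  conv_lhs => rw [← ofSlices_slice (μ : Measure (EnvSp d))]
  exact ofSlices_mono (slice_le_of_mem_M1star hμ)

lemma refM_univ_le (ν : Measure (EnvSp d)) [IsProbabilityMeasure ν] :
    refM ν Set.univ ≤ Fintype.card (Step d) := by
  have hmarg : marg1 ν Set.univ = 1 := by
    rw [marg1, Measure.map_apply measurable_fst .univ, Set.preimage_univ, measure_univ]
  have htrans (e : Step d) :
      (marg1 ν).withDensity (fun ω => ENNReal.ofReal (trans ω 0 e.1)) Set.univ ≤ 1 := by
    calc
      _ ≤ (marg1 ν).withDensity 1 Set.univ := withDensity_mono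
        (Eventually.of_forall fun ω => ENNReal.ofReal_le_one.2 (trans_le_one ω 0 e.1)) _
      _ = 1 := by rw [withDensity_one, hmarg]
  calc
    refM ν Set.univ ≤ ∑ _e : Step d, 1 := by
      rw [refM_eq_ofSlices, ofSlices_apply _ .univ]
      exact Finset.sum_le_sum fun e _ => htrans e
    _ = Fintype.card (Step d) := by rw [Finset.sum_const, nsmul_one, Finset.card_univ]

/-- A bound for the entropy functional valid on the whole of `M1star d P₀`. -/
def entBound (d : ℕ) : ℝ≥0∞ :=
  ENNReal.ofReal ((Ud d).card ^ 2 + 1) * Fintype.card (Step d)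

lemma entBound_lt_top : entBound d < ∞ :=
  ENNReal.mul_lt_top ENNReal.ofReal_lt_top (ENNReal.natCast_lt_top _)

lemma entI_le_entBound (hμ : μ ∈ M1star d P₀) : entI P₀ μ ≤ entBound d := by
  have hle := le_smul_refM_of_mem_M1star hμ
  have hfin : IsFiniteMeasure (refM (μ : Measure (EnvSp d))) :=
    ⟨(refM_univ_le _).trans_lt (ENNReal.natCast_lt_top _)⟩
  rw [entI, if_pos ⟨hμ, Measure.absolutelyContinuous_of_le_smul hle⟩]
  calc
    _ ≤ ∫⁻ _, ENNReal.ofReal ((Ud d).card ^ 2 + 1) ∂refM (μ : Measure (EnvSp d)) := by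
      refine lintegral_mono_ae ((rnDeriv_le_of_le_smul hle).mono fun z hz => ?_)
      refine ENNReal.ofReal_le_ofReal (klFun_le ENNReal.toReal_nonneg ?_)
      exact ENNReal.toReal_mono (ENNReal.natCast_ne_top _) hz
    _ ≤ entBound d := by
      rw [lintegral_const]
      exact mul_le_mul_right (refM_univ_le _) _

lemma entI_eq_top (hμ : μ ∉ M1star d P₀) : entI P₀ μ = ∞ :=
  if_neg fun h => hμ h.1

end EntropyBound

section WithDensity

variable {α ι : Type*} [MeasurableSpace α] [Fintype ι] (μ : Measure α) {g : ι → α → ℝ≥0∞}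

lemma sum_withDensity (hg : ∀ i, Measurable (g i)) :
    ∑ i, μ.withDensity (g i) = μ.withDensity (∑ i, g i) := by
  rw [← Measure.sum_fintype, ← withDensity_tsum hg, tsum_fintype]

lemma sum_withDensity_withDensity_div (hg : ∀ i, Measurable (g i)) (hfin : ∀ i x, g i x ≠ ∞)
    (i : ι) : (∑ j, μ.withDensity (g j)).withDensity (g i / ∑ j, g j) = μ.withDensity (g i) := by
  have hsum : Measurable (∑ j, g j) := by fun_prop
  rw [sum_withDensity μ hg, ← withDensity_mul μ hsum ((hg i).div hsum)]
  congr 1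
  ext x
  rw [Pi.mul_apply, Pi.div_apply, Finset.sum_apply]
  refine ENNReal.mul_div_cancel' (fun h => ?_) fun h => ?_
  · exact (Finset.sum_eq_zero_iff.1 h) i (Finset.mem_univ i)
  · exact absurd h (ENNReal.sum_ne_top.2 fun j _ => hfin j x)

end WithDensity

section Conductances

variable (Q : Measure (Config d)) [IsFiniteMeasure Q] (c : Step d → ℝ≥0)

/-- The measure `1{ω(e) = 1} c(e) dQ(ω)` on `Ω × 𝕌_d`: the unnormalized stationary law of the pair
(environment, next step) for the random walk with conductance `c e` on open bonds in
direction `e`. -/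
def conductanceMeasure : FiniteMeasure (EnvSp d) :=
  ∑ e, c e • FiniteMeasure.map ⟨Q.restrict (openBond e), inferInstance⟩ fun ω => (ω, e)

lemma toMeasure_conductanceMeasure : (conductanceMeasure Q c : Measure (EnvSp d)) =
    ofSlices fun e => c e • Q.restrict (openBond e) := by
  simp only [conductanceMeasure, ofSlices, FiniteMeasure.toMeasure_sum,
    FiniteMeasure.toMeasure_smul, Measure.map_smul]
  rfl

lemma conductanceMeasure_smul (r : ℝ≥0) :
    conductanceMeasure Q (r • c) = r • conductanceMeasure Q c := by
  simp only [conductanceMeasure, Finset.smul_sum, Pi.smul_apply, smul_eq_mul, mul_smul]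

lemma continuous_conductanceMeasure : Continuous (conductanceMeasure Q) :=
  continuous_finsetSum _ fun e _ => (continuous_apply e).smul continuous_const

variable {Q c}

lemma slice_conductanceMeasure (e : Step d) :
    slice (conductanceMeasure Q c : Measure (EnvSp d)) e = c e • Q.restrict (openBond e) := by
  rw [toMeasure_conductanceMeasure, slice_ofSlices]

lemma conductanceMeasure_ne_zero {e : Step d} (hc : c e ≠ 0) (he : Q (openBond e) ≠ 0) :
    conductanceMeasure Q c ≠ 0 := by
  intro h
  have hslice : c e • Q.restrict (openBond e) = 0 := by
    rw [← slice_conductanceMeasure, h, FiniteMeasure.toMeasure_zero, slice, Measure.restrict_zero,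
      Measure.map_zero]
  rw [(IsUnit.mk0 _ hc).smul_eq_zero, Measure.restrict_eq_zero] at hslice
  exact he hslice

lemma marg1_eq_marg2_conductanceMeasure (hQ : IsEdgeReversible Q) (hc : ∀ e, c (-e) = c e) :
    marg1 (conductanceMeasure Q c : Measure (EnvSp d)) =
      marg2 (conductanceMeasure Q c : Measure (EnvSp d)) := by
  rw [toMeasure_conductanceMeasure, marg1_ofSlices, marg2_ofSlices]
  refine (Fintype.sum_equiv (Equiv.neg (Step d)) _ _ fun e => ?_).symm
  rw [Measure.map_smul, hQ e, Equiv.neg_apply, hc]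

lemma exists_normalize_conductanceMeasure_eq [Nonempty (EnvSp d)]
    (h : conductanceMeasure Q c ≠ 0) : ∃ r : ℝ≥0, 0 < r ∧
      (conductanceMeasure Q c).normalize.toFiniteMeasure = conductanceMeasure Q (r • c) := by
  refine ⟨(conductanceMeasure Q c).mass⁻¹, inv_pos.2 (pos_iff_ne_zero.2 ?_), ?_⟩
  · exact (FiniteMeasure.mass_nonzero_iff _).2 h
  · rw [conductanceMeasure_smul]
    exact FiniteMeasure.normalize_eq_inv_mass_smul_of_nonzero _ h

variable {μ : ProbabilityMeasure (EnvSp d)}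

lemma mem_M1star_of_eq_conductanceMeasure (hμ : μ.toFiniteMeasure = conductanceMeasure Q c)
    (hQ : IsEdgeReversible Q) (hc : ∀ e, c (-e) = c e) (hpos : ∀ e, 0 < c e) :
    μ ∈ M1star d Q := by
  let g : Step d → Config d → ℝ≥0∞ := fun e => (openBond e).indicator fun _ => c e
  have hg (e : Step d) : Measurable (g e) :=
    measurable_const.indicator (measurableSet_openBond e)
  have hfin (e : Step d) (ω : Config d) : g e ω ≠ ∞ :=
    (Set.indicator_le_self' (fun _ _ => zero_le) ω).trans_lt ENNReal.coe_lt_top |>.ne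
  have hQg (e : Step d) : Q.withDensity (g e) = c e • Q.restrict (openBond e) := by
    rw [withDensity_indicator (measurableSet_openBond e), withDensity_const]
    rfl
  have hcoe : (μ : Measure (EnvSp d)) = conductanceMeasure Q c :=
    congrArg FiniteMeasure.toMeasure hμ
  have hmarg : marg1 (μ : Measure (EnvSp d)) = ∑ e, Q.withDensity (g e) := by
    rw [hcoe, toMeasure_conductanceMeasure, marg1_ofSlices]
    exact Finset.sum_congr rfl fun e _ => (hQg e).symm
  refine ⟨?_, ?_, fun e => g e / ∑ e', g e',
    fun e => (hg e).div (by fun_prop), fun e => ?_, fun e => Eventually.of_forall fun ω => ?_⟩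
  · rw [hcoe, marg1_eq_marg2_conductanceMeasure hQ hc]
  · rw [hmarg, sum_withDensity Q hg]
    exact withDensity_absolutelyContinuous _ _
  · rw [hmarg, sum_withDensity_withDensity_div Q hg hfin, hcoe, slice_conductanceMeasure, hQg]
  · have htop : ∑ e', g e' ω ≠ ∞ := ENNReal.sum_ne_top.2 fun e' _ => hfin e' ω
    change 0 < g e ω / (∑ e', g e') ω ↔ ω ∈ openBond e
    rw [Finset.sum_apply, ENNReal.div_pos_iff, and_iff_left htop,
      Set.indicator_apply_ne_zero]
    exact ⟨fun h => h.1, fun h => ⟨h, (ENNReal.coe_pos.2 (hpos e)).ne'⟩⟩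

lemma notMem_M1star_of_eq_conductanceMeasure (hμ : μ.toFiniteMeasure = conductanceMeasure Q c)
    {e₀ e₁ : Step d} (h₀ : c e₀ ≠ 0) (h₁ : c e₁ = 0)
    (hpos : 0 < Q (openBond e₀ ∩ openBond e₁)) : μ ∉ M1star d Q := by
  intro hmem
  have hslice (e : Step d) : slice (μ : Measure (EnvSp d)) e = c e • Q.restrict (openBond e) := by
    rw [← slice_conductanceMeasure, ← hμ]
    rfl
  have hzero : marg1 (μ : Measure (EnvSp d)) (openBond e₁) = 0 :=
    marg1_openBond_eq_zero_of_slice_eq_zero hmem (by rw [hslice, h₁, zero_smul])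
  have hzero₀ : slice (μ : Measure (EnvSp d)) e₀ (openBond e₁) = 0 :=
    le_antisymm ((slice_le_marg1 _ e₀ _).trans_eq hzero) zero_le
  rw [hslice, Measure.smul_apply, (IsUnit.mk0 _ h₀).smul_eq_zero,
    Measure.restrict_apply (measurableSet_openBond e₁), Set.inter_comm] at hzero₀
  exact hpos.ne' hzero₀

end Conductances

section NotLowerSemicontinuous

lemma not_lowerSemicontinuous_of_tendsto {X α β : Type*} [TopologicalSpace X] [LinearOrder β]
    {l : Filter α} [l.NeBot] {f : X → β} {u : α → X} {x : X} {b : β} (hu : Tendsto u l (𝓝 x))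
    (hle : ∀ᶠ a in l, f (u a) ≤ b) (hlt : b < f x) : ¬ LowerSemicontinuous f := fun hf =>
  have ⟨_, hgt, hle⟩ := ((hu.eventually (hf x b hlt)).and hle).exists
  hgt.not_ge hle

/-- Conductance `1 + s` along the axis of `e₀` and `s` along all the others. -/
def axisConductance (e₀ : Step d) (s : ℝ≥0) (e : Step d) : ℝ≥0 :=
  Set.indicator {e₀, -e₀} 1 e + s

lemma axisConductance_neg (e₀ : Step d) (s : ℝ≥0) (e : Step d) :
    axisConductance e₀ s (-e) = axisConductance e₀ s e := by
  have hmem : -e ∈ ({e₀, -e₀} : Set (Step d)) ↔ e ∈ ({e₀, -e₀} : Set (Step d)) := by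
    rw [Set.mem_insert_iff, Set.mem_singleton_iff, neg_inj, neg_eq_iff_eq_neg, or_comm]
    rfl
  simp only [axisConductance, Set.indicator, hmem, Pi.one_apply]

lemma axisConductance_self_ne_zero (e₀ : Step d) (s : ℝ≥0) : axisConductance e₀ s e₀ ≠ 0 := by
  simp [axisConductance]

lemma axisConductance_zero_eq_zero {e₀ e : Step d} (h : e ≠ e₀) (h' : e ≠ -e₀) :
    axisConductance e₀ 0 e = 0 := by
  simp [axisConductance, h, h']

lemma continuous_axisConductance (e₀ : Step d) : Continuous (axisConductance e₀) :=
  continuous_pi fun _ => continuous_const.add continuous_id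

lemma not_lowerSemicontinuous_entI {Q : Measure (Config d)} [IsFiniteMeasure Q]
    (hQ : IsEdgeReversible Q) {e₀ e₁ : Step d} (hne : e₁ ≠ e₀) (hne_neg : e₁ ≠ -e₀)
    (hpos : 0 < Q (openBond e₀ ∩ openBond e₁)) :
    ¬ LowerSemicontinuous fun μ : ProbabilityMeasure (EnvSp d) => entI Q μ := by
  have : Nonempty (EnvSp d) := ⟨(⊤, e₀)⟩
  have hnz (s : ℝ≥0) : conductanceMeasure Q (axisConductance e₀ s) ≠ 0 :=
    conductanceMeasure_ne_zero (axisConductance_self_ne_zero e₀ s)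
      (hpos.trans_le (measure_mono Set.inter_subset_left)).ne'
  refine not_lowerSemicontinuous_of_tendsto (l := 𝓝[>] 0) (b := entBound d)
    (x := (conductanceMeasure Q (axisConductance e₀ 0)).normalize)
    (u := fun s => (conductanceMeasure Q (axisConductance e₀ s)).normalize) ?_ ?_ ?_
  · have hcont : Continuous fun s => conductanceMeasure Q (axisConductance e₀ s) :=
      (continuous_conductanceMeasure Q).comp (continuous_axisConductance e₀)
    exact FiniteMeasure.tendsto_normalize_of_tendsto
      ((hcont.tendsto 0).mono_left nhdsWithin_le_nhds) (hnz 0)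
  · filter_upwards [self_mem_nhdsWithin] with s hs
    obtain ⟨r, hr, hnorm⟩ := exists_normalize_conductanceMeasure_eq (hnz s)
    refine entI_le_entBound (mem_M1star_of_eq_conductanceMeasure hnorm hQ (fun e => ?_) fun e => ?_)
    · rw [Pi.smul_apply, axisConductance_neg, Pi.smul_apply]
    · exact mul_pos hr (add_pos_of_nonneg_of_pos zero_le hs)
  · obtain ⟨r, hr, hnorm⟩ := exists_normalize_conductanceMeasure_eq (hnz 0)
    refine entBound_lt_top.trans_eq
      (entI_eq_top (notMem_M1star_of_eq_conductanceMeasure hnorm ?_ ?_ hpos)).symm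
    · exact mul_ne_zero hr.ne' (axisConductance_self_ne_zero e₀ 0)
    · rw [Pi.smul_apply, axisConductance_zero_eq_zero hne hne_neg, smul_zero]

end NotLowerSemicontinuous

section Bidual

variable (P₀ : Measure (Config d))

lemma continuous_pairing (f : BoundedContinuousFunction (EnvSp d) ℝ) :
    Continuous (pairing (d := d) f) :=
  ProbabilityMeasure.continuous_integral_boundedContinuousFunction f

lemma lowerSemicontinuous_entIbis : LowerSemicontinuous (entIbis P₀) := by
  refine lowerSemicontinuous_iSup fun f => Continuous.lowerSemicontinuous ?_
  induction entIstar P₀ f with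
  | bot => simpa only [EReal.coe_sub_bot] using continuous_const
  | top => simpa only [EReal.sub_top] using continuous_const
  | coe r =>
    exact continuous_coe_real_ereal.comp ((continuous_pairing f).sub continuous_const)

variable {P₀} in
lemma lowerSemicontinuous_entI_of_eq_entIbis
    (h : (fun μ : ProbabilityMeasure (EnvSp d) => (entI P₀ μ : EReal)) = entIbis P₀) :
    LowerSemicontinuous fun μ : ProbabilityMeasure (EnvSp d) => entI P₀ μ := by
  intro μ a ha
  have hlsc := h ▸ lowerSemicontinuous_entIbis P₀
  exact (hlsc μ a (EReal.coe_ennreal_lt_coe_ennreal_iff.2 ha)).mono fun _ =>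
    EReal.coe_ennreal_lt_coe_ennreal_iff.1

end Bidual

end SRWPC

open SRWPC in
/-- **The entropy functional is not lower semicontinuous** (Lemma 6.2). -/
theorem entropy_functional_not_lsc
    (d : ℕ) (hd : 2 ≤ d) (p : ℝ) (hp0 : 0 < p) (hp1 : p < 1) (hpc : pc d < p)
    (P : Measure (Config d)) (hP : IsBernoulli d p P) :
    ¬ LowerSemicontinuous (fun μ : ProbabilityMeasure (EnvSp d) => entI (P[|cluZero d]) μ) ∧
    (fun μ : ProbabilityMeasure (EnvSp d) => ((entI (P[|cluZero d]) μ : ℝ≥0∞) : EReal)) ≠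
      entIbis (P[|cluZero d]) := by
  have : Nontrivial (Fin d) := Fin.nontrivial_iff_two_le.2 hd
  obtain ⟨i, j, hij⟩ := exists_pair_ne (Fin d)
  have := hP.1
  have hlsc : ¬ LowerSemicontinuous
      (fun μ : ProbabilityMeasure (EnvSp d) => entI (P[|cluZero d]) μ) :=
    not_lowerSemicontinuous_entI (isEdgeReversible_cond_cluZero hP.map_shift)
      (coordStep_injective.ne hij.symm) (coordStep_ne_neg_coordStep j i)
      (hP.cond_openBond_inter_pos hp0 hpc i j)
  exact ⟨hlsc, fun h => hlsc (lowerSemicontinuous_entI_of_eq_entIbis h)⟩
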